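/- arXiv:quant-ph/0510020 — 10 statements merged into one kernel-verified Lean document; each statement's English description precedes it below -/
import Mathlib

section
/- The following are equivalent: (i) for every s₀ ∈ ℝ³ with ‖s₀‖ ≤ 1, the reachable set R(s₀) equals the closed unit ball of ℝ³; (ii) the odd-ratio condition holds, i.e. c_x, c_y, c_z are all nonzero and there exist integers k₁, k₂, k₃ such that c_x·(2k₂+1) = c_y·(2k₁+1) and c_x·(2k₃+1) = c_z·(2k₁+1). -/
open Matrix Real

noncomputable section

/-- The matrix `A(t, s₀)` of the affine Bloch-vector dynamics. -/
def Amat (cx cy cz t : ℝ) (s : Fin 3 → ℝ) : Matrix (Fin 3) (Fin 3) ℝ :=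
  !![Real.sin (2*cy*t) * Real.sin (2*cz*t), -(s 2) * Real.sin (2*cy*t) * Real.cos (2*cz*t),
       s 1 * Real.cos (2*cy*t) * Real.sin (2*cz*t);
     s 2 * Real.sin (2*cx*t) * Real.cos (2*cz*t), Real.sin (2*cx*t) * Real.sin (2*cz*t),
       -(s 0) * Real.cos (2*cx*t) * Real.sin (2*cz*t);
     -(s 1) * Real.cos (2*cy*t) * Real.sin (2*cx*t), s 0 * Real.cos (2*cx*t) * Real.sin (2*cy*t),
       Real.sin (2*cx*t) * Real.sin (2*cy*t)]

/-- The inhomogeneous part `a(t, s₀)` of the affine Bloch-vector dynamics. -/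
def avec (cx cy cz t : ℝ) (s : Fin 3 → ℝ) : Fin 3 → ℝ :=
  ![s 0 * Real.cos (2*cy*t) * Real.cos (2*cz*t),
    s 1 * Real.cos (2*cx*t) * Real.cos (2*cz*t),
    s 2 * Real.cos (2*cx*t) * Real.cos (2*cy*t)]

/-- The odd-ratio condition on the interaction constants. -/
def OddRatio (cx cy cz : ℝ) : Prop :=
  cx ≠ 0 ∧ cy ≠ 0 ∧ cz ≠ 0 ∧
    ∃ k₁ k₂ k₃ : ℤ, cx * (2 * (k₂ : ℝ) + 1) = cy * (2 * (k₁ : ℝ) + 1) ∧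
      cx * (2 * (k₃ : ℝ) + 1) = cz * (2 * (k₁ : ℝ) + 1)

/-- The reachable set from Bloch vector `s₀`:
`R(s₀) = {A(t,s₀)p + a(t,s₀) : t ≥ 0, ‖p‖ ≤ 1}`. -/
def reach (cx cy cz : ℝ) (s₀ : EuclideanSpace ℝ (Fin 3)) : Set (EuclideanSpace ℝ (Fin 3)) :=
  {v | ∃ t ≥ (0:ℝ), ∃ p : EuclideanSpace ℝ (Fin 3), ‖p‖ ≤ 1 ∧
    (Amat cx cy cz t s₀).mulVec p + avec cx cy cz t s₀ = v}


open scoped Kronecker ComplexOrder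

def pX : Matrix (Fin 2) (Fin 2) ℂ := !![0, 1; 1, 0]
def pY : Matrix (Fin 2) (Fin 2) ℂ := !![0, -Complex.I; Complex.I, 0]
def pZ : Matrix (Fin 2) (Fin 2) ℂ := !![1, 0; 0, -1]

def MX (b b' c c' : ℂ) : Matrix (Fin 2 × Fin 2) (Fin 2 × Fin 2) ℂ :=
  (b * c) • (pX ⊗ₖ 1) + (b' * c') • (1 ⊗ₖ pX) + (b * c') • (pY ⊗ₖ pZ) - (b' * c) • (pZ ⊗ₖ pY)

def MY (a a' c c' : ℂ) : Matrix (Fin 2 × Fin 2) (Fin 2 × Fin 2) ℂ :=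
  (a * c) • (pY ⊗ₖ 1) + (a' * c') • (1 ⊗ₖ pY) + (a' * c) • (pZ ⊗ₖ pX) - (a * c') • (pX ⊗ₖ pZ)

def MZ (a a' b b' : ℂ) : Matrix (Fin 2 × Fin 2) (Fin 2 × Fin 2) ℂ :=
  (a * b) • (pZ ⊗ₖ 1) + (a' * b') • (1 ⊗ₖ pZ) + (a * b') • (pX ⊗ₖ pY) - (b * a') • (pY ⊗ₖ pX)

/-- The unnormalised qubit state with Bloch vector `(x, y, z)`. -/
def rho (x y z : ℝ) : Matrix (Fin 2) (Fin 2) ℂ :=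
  !![1 + z, x - y * Complex.I; x + y * Complex.I, 1 - z]

lemma rho_psd (x y z : ℝ) (h : x^2 + y^2 + z^2 ≤ 1) : (rho x y z).PosSemidef := by
  obtain ⟨w, hw0, hw⟩ : ∃ w : ℝ, 0 ≤ w ∧ w^2 = 1 - (x^2+y^2+z^2) :=
    ⟨√(1 - (x^2+y^2+z^2)), Real.sqrt_nonneg _, Real.sq_sqrt (by linarith)⟩
  obtain ⟨α, hα0, hα⟩ : ∃ α : ℝ, 0 < α ∧ α^2 = (1 + w)/2 :=
    ⟨√((1+w)/2), Real.sqrt_pos.2 (by linarith), Real.sq_sqrt (by linarith)⟩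
  obtain ⟨β, hβ⟩ : ∃ β : ℝ, 2 * α * β = 1 := ⟨1/(2*α), by field_simp⟩
  have h2 : α^2 + β^2 * (x^2+y^2+z^2) = 1 := by
    have h3 : β^2 * (1 + w) = 1/2 := by
      have : 4 * α^2 * β^2 = 1 := by
        calc 4 * α^2 * β^2 = (2*α*β)^2 := by ring
          _ = 1 := by rw [hβ]; norm_num
      rw [hα] at this; linarith
    have h4 : x^2+y^2+z^2 = (1 + w) * (1 - w) := by linarith
    rw [h4, ← mul_assoc, h3, hα]; ring
  have e1 : (2:ℂ) * α * β = 1 := by exact_mod_cast hβ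
  have e2 : (α:ℂ)^2 + β^2 * (x^2+y^2+z^2) = 1 := by exact_mod_cast h2
  let R : Matrix (Fin 2) (Fin 2) ℂ :=
    !![α + β * z, β * (x - y * Complex.I); β * (x + y * Complex.I), α - β * z]
  have hR : rho x y z = Rᴴ * R := by
    ext i j
    fin_cases i <;> fin_cases j <;>
      simp [rho, R, Matrix.mul_apply, Fin.sum_univ_two, Matrix.conjTranspose_apply]
    · linear_combination (-z) * e1 - e2 + β^2 * y^2 * Complex.I_sq
    · linear_combination (-(x - y * Complex.I)) * e1
    · linear_combination (-(x + y * Complex.I)) * e1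
    · linear_combination z * e1 - e2 + β^2 * y^2 * Complex.I_sq
  rw [hR]
  exact Matrix.posSemidef_conjTranspose_mul_self R

lemma MX_sq (b b' c c' : ℂ) (hb : b^2 + b'^2 = 1) (hc : c^2 + c'^2 = 1) :
    MX b b' c c' * MX b b' c c' = 1 := by
  ext ⟨i, i'⟩ ⟨j, j'⟩
  fin_cases i <;> fin_cases i' <;> fin_cases j <;> fin_cases j' <;>
    simp [MX, pX, pY, pZ, Matrix.mul_apply, Fintype.sum_prod_type, Matrix.one_apply] <;>
    first
    | ring1
    | linear_combination (c^2 + c'^2) * hb + hc - (b'^2 * c^2) * (Complex.I_sq)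
    | linear_combination (c^2 + c'^2) * hb + hc - (b^2 * c'^2) * (Complex.I_sq)
    | linear_combination (c^2 + c'^2) * hb + hc - (b^2 * c'^2 + b'^2 * c^2) * (Complex.I_sq)
    | linear_combination (2 * b * b' * c * c') * (Complex.I_sq)
    | linear_combination (-2 * b * b' * c * c') * (Complex.I_sq)

lemma MY_sq (a a' c c' : ℂ) (hb : a^2 + a'^2 = 1) (hc : c^2 + c'^2 = 1) :
    MY a a' c c' * MY a a' c c' = 1 := by
  ext ⟨i, i'⟩ ⟨j, j'⟩
  fin_cases i <;> fin_cases i' <;> fin_cases j <;> fin_cases j' <;>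
    simp [MY, pX, pY, pZ, Matrix.mul_apply, Fintype.sum_prod_type, Matrix.one_apply] <;>
    first
    | ring1
    | linear_combination (c^2 + c'^2) * hb + hc - (a^2 * c^2 + a'^2 * c'^2) * (Complex.I_sq)
    | linear_combination (2 * a * a' * c * c') * (Complex.I_sq)
    | linear_combination (-2 * a * a' * c * c') * (Complex.I_sq)

lemma MZ_sq (a a' b b' : ℂ) (hb : a^2 + a'^2 = 1) (hc : b^2 + b'^2 = 1) :
    MZ a a' b b' * MZ a a' b b' = 1 := by
  ext ⟨i, i'⟩ ⟨j, j'⟩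
  fin_cases i <;> fin_cases i' <;> fin_cases j <;> fin_cases j' <;>
    simp [MZ, pX, pY, pZ, Matrix.mul_apply, Fintype.sum_prod_type, Matrix.one_apply] <;>
    first
    | ring1
    | linear_combination (b^2 + b'^2) * hb + hc - (a^2 * b'^2 + a'^2 * b^2) * (Complex.I_sq) + 2 * a * a' * b * b' * Complex.I_sq
    | linear_combination (b^2 + b'^2) * hb + hc - (a^2 * b'^2 + a'^2 * b^2) * (Complex.I_sq) - 2 * a * a' * b * b' * Complex.I_sq
    | linear_combination (2 * a * a' * b * b') * (Complex.I_sq)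
    | linear_combination (-2 * a * a' * b * b') * (Complex.I_sq)

lemma MXY (a a' b b' c c' : ℂ) :
    MX b b' c c' * MY a a' c c' + MY a a' c c' * MX b b' c c' = 0 := by
  ext ⟨i, i'⟩ ⟨j, j'⟩
  fin_cases i <;> fin_cases i' <;> fin_cases j <;> fin_cases j' <;>
    simp [MX, MY, pX, pY, pZ, Matrix.mul_apply, Fintype.sum_prod_type, Matrix.one_apply] <;>
    ring_nf <;> simp [Complex.I_sq]

lemma MXZ (a a' b b' c c' : ℂ) :
    MX b b' c c' * MZ a a' b b' + MZ a a' b b' * MX b b' c c' = 0 := by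
  ext ⟨i, i'⟩ ⟨j, j'⟩
  fin_cases i <;> fin_cases i' <;> fin_cases j <;> fin_cases j' <;>
    simp [MX, MZ, pX, pY, pZ, Matrix.mul_apply, Fintype.sum_prod_type, Matrix.one_apply] <;>
    ring_nf <;> simp [Complex.I_sq]

lemma MYZ (a a' b b' c c' : ℂ) :
    MY a a' c c' * MZ a a' b b' + MZ a a' b b' * MY a a' c c' = 0 := by
  ext ⟨i, i'⟩ ⟨j, j'⟩
  fin_cases i <;> fin_cases i' <;> fin_cases j <;> fin_cases j' <;>
    simp [MY, MZ, pX, pY, pZ, Matrix.mul_apply, Fintype.sum_prod_type, Matrix.one_apply] <;>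
    ring_nf <;> simp [Complex.I_sq]

lemma pX_h : pXᴴ = pX := by
  ext i j; fin_cases i <;> fin_cases j <;> simp [pX]
lemma pY_h : pYᴴ = pY := by
  ext i j; fin_cases i <;> fin_cases j <;> simp [pY]
lemma pZ_h : pZᴴ = pZ := by
  ext i j; fin_cases i <;> fin_cases j <;> simp [pZ]

lemma MX_h (b b' c c' : ℝ) : (MX b b' c c')ᴴ = MX b b' c c' := by
  simp [MX, conjTranspose_kronecker, pX_h, pY_h, pZ_h, Matrix.conjTranspose_smul]
lemma MY_h (b b' c c' : ℝ) : (MY b b' c c')ᴴ = MY b b' c c' := by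
  simp [MY, conjTranspose_kronecker, pX_h, pY_h, pZ_h, Matrix.conjTranspose_smul]
lemma MZ_h (b b' c c' : ℝ) : (MZ b b' c c')ᴴ = MZ b b' c c' := by
  simp [MZ, conjTranspose_kronecker, pX_h, pY_h, pZ_h, Matrix.conjTranspose_smul]

lemma tr_X (b b' c c' : ℂ) (x y z p q r : ℝ) :
    (MX b b' c c' * (rho x y z ⊗ₖ rho p q r)).trace =
      4 * (b' * c' * p - z * b' * c * q + y * b * c' * r + x * b * c) := by
  simp [MX, pX, pY, pZ, rho, Matrix.trace, Matrix.mul_apply, Fintype.sum_prod_type,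
    Matrix.one_apply]
  ring_nf
  simp [Complex.I_sq]
  ring

lemma tr_Y (a a' c c' : ℂ) (x y z p q r : ℝ) :
    (MY a a' c c' * (rho x y z ⊗ₖ rho p q r)).trace =
      4 * (z * a' * c * p + a' * c' * q - x * a * c' * r + y * a * c) := by
  simp [MY, pX, pY, pZ, rho, Matrix.trace, Matrix.mul_apply, Fintype.sum_prod_type,
    Matrix.one_apply]
  ring_nf
  try simp [Complex.I_sq]
  try ring

lemma tr_Z (a a' b b' : ℂ) (x y z p q r : ℝ) :
    (MZ a a' b b' * (rho x y z ⊗ₖ rho p q r)).trace =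
      4 * (- y * b * a' * p + x * a * b' * q + a' * b' * r + z * a * b) := by
  simp [MZ, pX, pY, pZ, rho, Matrix.trace, Matrix.mul_apply, Fintype.sum_prod_type,
    Matrix.one_apply]
  ring_nf
  try simp [Complex.I_sq]
  try ring

lemma tr_1 (x y z p q r : ℝ) : (rho x y z ⊗ₖ rho p q r).trace = 4 := by
  simp [rho, Matrix.trace, Fintype.sum_prod_type]
  ring

lemma key (a a' b b' c c' x y z p q r : ℝ) (ha : a^2 + a'^2 = 1) (hb : b^2 + b'^2 = 1)
    (hc : c^2 + c'^2 = 1) (hs : x^2 + y^2 + z^2 ≤ 1) (hp : p^2 + q^2 + r^2 ≤ 1)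
    (u v w : ℝ)
    (hu : u = b' * c' * p - z * b' * c * q + y * b * c' * r + x * b * c)
    (hv : v = z * a' * c * p + a' * c' * q - x * a * c' * r + y * a * c)
    (hw : w = - y * b * a' * p + x * a * b' * q + a' * b' * r + z * a * b) :
    u^2 + v^2 + w^2 ≤ 1 := by
  have hρ := (rho_psd x y z hs).kronecker (rho_psd p q r hp)
  have tX := tr_X b b' c c' x y z p q r
  have tY := tr_Y a a' c c' x y z p q r
  have tZ := tr_Z a a' b b' x y z p q r
  have t1 := tr_1 x y z p q r
  have sX := MX_sq b b' c c' (by exact_mod_cast hb) (by exact_mod_cast hc)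
  have sY := MY_sq a a' c c' (by exact_mod_cast ha) (by exact_mod_cast hc)
  have sZ := MZ_sq a a' b b' (by exact_mod_cast ha) (by exact_mod_cast hb)
  have aXY := MXY a a' b b' c c'
  have aXZ := MXZ a a' b b' c c'
  have aYZ := MYZ a a' b b' c c'
  have hX := MX_h b b' c c'
  have hY := MY_h a a' c c'
  have hZ := MZ_h a a' b b'
  generalize MX b b' c c' = X at *
  generalize MY a a' c c' = Y at *
  generalize MZ a a' b b' = Z at *
  generalize rho x y z ⊗ₖ rho p q r = ρ at *
  obtain ⟨m, hm⟩ : ∃ m : ℝ, m = u^2 + v^2 + w^2 := ⟨_, rfl⟩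
  let N : Matrix (Fin 2 × Fin 2) (Fin 2 × Fin 2) ℂ := (u:ℂ) • X + (v:ℂ) • Y + (w:ℂ) • Z
  have hN : (N - (m:ℂ) • 1)ᴴ = N - (m:ℂ) • 1 := by
    simp [N, hX, hY, hZ, Matrix.conjTranspose_smul]
  have hN2 : N * N = (m:ℂ) • 1 := by
    have : N * N = ((u:ℂ)*u) • (X*X) + ((v:ℂ)*v) • (Y*Y) + ((w:ℂ)*w) • (Z*Z)
        + ((u:ℂ)*v) • (X*Y + Y*X) + ((u:ℂ)*w) • (X*Z + Z*X) + ((v:ℂ)*w) • (Y*Z+Z*Y) := by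
      simp only [N, mul_add, add_mul, smul_mul_assoc, mul_smul_comm, smul_add, smul_smul]
      module
    rw [this, sX, sY, sZ, aXY, aXZ, aYZ, hm]
    push_cast
    module
  have tN : (N * ρ).trace = 4 * (m:ℂ) := by
    simp only [N, add_mul, smul_mul_assoc, Matrix.trace_add, Matrix.trace_smul, tX, tY, tZ,
      smul_eq_mul]
    have hu' : (u:ℂ) = b' * c' * p - z * b' * c * q + y * b * c' * r + x * b * c := by
      exact_mod_cast hu
    have hv' : (v:ℂ) = z * a' * c * p + a' * c' * q - x * a * c' * r + y * a * c := by
      exact_mod_cast hv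
    have hw' : (w:ℂ) = - y * b * a' * p + x * a * b' * q + a' * b' * r + z * a * b := by
      exact_mod_cast hw
    rw [← hu', ← hv', ← hw', hm]
    push_cast
    ring
  have h0 := (hρ.mul_mul_conjTranspose_same (N - (m:ℂ) • 1)).trace_nonneg
  rw [hN, Matrix.trace_mul_comm, ← mul_assoc] at h0
  have h1 : (N - (m:ℂ) • 1) * (N - (m:ℂ) • 1) =
      ((m:ℂ) + m * m) • 1 - (2 * (m:ℂ)) • N := by
    rw [sub_mul, mul_sub, mul_sub, hN2]
    simp only [smul_mul_assoc, mul_smul_comm, one_mul, mul_one, smul_smul]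
    module
  rw [h1, sub_mul, Matrix.trace_sub, smul_mul_assoc, smul_mul_assoc, Matrix.trace_smul,
    Matrix.trace_smul, tN, one_mul, t1] at h0
  have h2 : (0:ℝ) ≤ (m + m * m) * 4 - 2 * m * (4 * m) := by
    simp only [smul_eq_mul] at h0
    exact_mod_cast h0
  rw [← hm]
  by_contra hcon
  push Not at hcon
  nlinarith

lemma norm_le_one_iff (v : EuclideanSpace ℝ (Fin 3)) :
    ‖v‖ ≤ 1 ↔ v 0 ^ 2 + v 1 ^ 2 + v 2 ^ 2 ≤ 1 := by
  rw [EuclideanSpace.norm_eq, Real.sqrt_le_one]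
  simp [Fin.sum_univ_three]

lemma mem_reach_iff (cx cy cz : ℝ) (s v : EuclideanSpace ℝ (Fin 3)) :
    v ∈ reach cx cy cz s ↔ ∃ t ≥ (0:ℝ), ∃ p : EuclideanSpace ℝ (Fin 3), ‖p‖ ≤ 1 ∧
      v 0 = sin (2*cy*t) * sin (2*cz*t) * p 0 - s 2 * sin (2*cy*t) * cos (2*cz*t) * p 1
        + s 1 * cos (2*cy*t) * sin (2*cz*t) * p 2 + s 0 * cos (2*cy*t) * cos (2*cz*t) ∧
      v 1 = s 2 * sin (2*cx*t) * cos (2*cz*t) * p 0 + sin (2*cx*t) * sin (2*cz*t) * p 1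
        - s 0 * cos (2*cx*t) * sin (2*cz*t) * p 2 + s 1 * cos (2*cx*t) * cos (2*cz*t) ∧
      v 2 = - s 1 * cos (2*cy*t) * sin (2*cx*t) * p 0 + s 0 * cos (2*cx*t) * sin (2*cy*t) * p 1
        + sin (2*cx*t) * sin (2*cy*t) * p 2 + s 2 * cos (2*cx*t) * cos (2*cy*t) := by
  unfold reach
  simp only [Set.mem_ofPred_eq]
  refine exists_congr fun t => and_congr_right fun _ => exists_congr fun p =>
    and_congr_right fun _ => ?_
  rw [funext_iff, Fin.forall_fin_succ, Fin.forall_fin_succ, Fin.forall_fin_succ]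
  simp [Amat, avec, Matrix.mulVec, dotProduct, Fin.sum_univ_three]
  constructor
  · rintro ⟨h0, h1, h2⟩
    exact ⟨by linarith, by linarith, by linarith⟩
  · rintro ⟨h0, h1, h2⟩
    exact ⟨by linarith, by linarith, by linarith⟩

lemma reach_sub (cx cy cz : ℝ) (s : EuclideanSpace ℝ (Fin 3)) (hs : ‖s‖ ≤ 1) :
    reach cx cy cz s ⊆ Metric.closedBall 0 1 := by
  intro v hv
  rw [mem_closedBall_zero_iff]
  obtain ⟨t, -, p, hp, h0, h1, h2⟩ := (mem_reach_iff _ _ _ _ _).1 hv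
  rw [norm_le_one_iff] at *
  exact key _ _ _ _ _ _ (s 0) (s 1) (s 2) (p 0) (p 1) (p 2) (cos_sq_add_sin_sq (2*cx*t))
    (cos_sq_add_sin_sq (2*cy*t)) (cos_sq_add_sin_sq (2*cz*t)) hs hp _ _ _ h0 h1 h2

lemma time_pos (cx cy cz : ℝ) (h : OddRatio cx cy cz) :
    ∃ t ≥ (0:ℝ), cos (2*cx*t) = 0 ∧ cos (2*cy*t) = 0 ∧ cos (2*cz*t) = 0 := by
  obtain ⟨hx, hy, hz, k1, k2, k3, h1, h2⟩ := h
  obtain ⟨t, ht⟩ : ∃ t : ℝ, t = (2*k1+1) * π / (4 * cx) := ⟨_, rfl⟩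
  have e1 : cos (2*cx*t) = 0 := Real.cos_eq_zero_iff.2 ⟨k1, by rw [ht]; field_simp; ring⟩
  have e2 : cos (2*cy*t) = 0 := Real.cos_eq_zero_iff.2 ⟨k2, by
    rw [ht]; field_simp; linear_combination (-4) * h1⟩
  have e3 : cos (2*cz*t) = 0 := Real.cos_eq_zero_iff.2 ⟨k3, by
    rw [ht]; field_simp; linear_combination (-4) * h2⟩
  rcases le_total 0 t with h | h
  · exact ⟨t, h, e1, e2, e3⟩
  · refine ⟨-t, by linarith, ?_, ?_, ?_⟩ <;> rwa [mul_neg, Real.cos_neg]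

lemma sq_lemma (g p m : ℝ) (hg : g ^ 2 ≤ 1) (h : m = g * p) : m^2 ≤ p^2 := by
  rw [h, mul_pow]; nlinarith [sq_nonneg p]

lemma sq_one_of (α β p m : ℝ) (hα : α^2 ≤ 1) (hβ : β^2 ≤ 1) (hm : m ≠ 0)
    (h : m = α * β * p) (hp : p^2 ≤ m^2) : α^2 = 1 ∧ β^2 = 1 := by
  have h1 : m^2 = α^2 * β^2 * p^2 := by rw [h]; ring
  have hm2 : 0 < m^2 := by positivity
  have hp2 : 0 < p^2 := by linarith [sq_lemma (α*β) p m (by rw [mul_pow]; nlinarith [sq_nonneg α, sq_nonneg β]) h]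
  have h3 : 1 ≤ α^2 * β^2 := by
    by_contra hc
    push Not at hc
    nlinarith
  constructor <;> nlinarith [sq_nonneg α, sq_nonneg β]

/-- Theorem 1, controllability: the reachable set from every Bloch
vector in the unit ball is the whole closed unit ball iff the odd-ratio condition
holds. -/
theorem controllable_iff_oddRatio (cx cy cz : ℝ) :
    (∀ s₀ : EuclideanSpace ℝ (Fin 3), ‖s₀‖ ≤ 1 →
      reach cx cy cz s₀ = Metric.closedBall (0 : EuclideanSpace ℝ (Fin 3)) 1) ↔
    OddRatio cx cy cz := by
  constructor
  · intro H
    have hv : (!₂[2/3, 2/3, 1/3] : EuclideanSpace ℝ (Fin 3)) ∈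
        Metric.closedBall (0 : EuclideanSpace ℝ (Fin 3)) 1 := by
      rw [mem_closedBall_zero_iff, norm_le_one_iff]
      simp
      norm_num
    rw [← H 0 (by simp)] at hv
    obtain ⟨t, ht, p, hp, h0, h1, h2⟩ := (mem_reach_iff _ _ _ _ _).1 hv
    rw [norm_le_one_iff] at hp
    simp at h0 h1 h2
    have ex := sin_sq_add_cos_sq (2*cx*t)
    have ey := sin_sq_add_cos_sq (2*cy*t)
    have ez := sin_sq_add_cos_sq (2*cz*t)
    have bx := sin_sq_le_one (2*cx*t)
    have bdy := sin_sq_le_one (2*cy*t)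
    have bz := sin_sq_le_one (2*cz*t)
    have prod : ∀ a b : ℝ, a^2 ≤ 1 → b^2 ≤ 1 → (a*b)^2 ≤ 1 := by
      intro a b ha hb
      rw [mul_pow]; nlinarith [sq_nonneg a, sq_nonneg b]
    have q0 := sq_lemma _ _ _ (prod _ _ bdy bz) h0
    have q1 := sq_lemma _ _ _ (prod _ _ bx bz) h1
    have q2 := sq_lemma _ _ _ (prod _ _ bx bdy) h2
    obtain ⟨hsy, hsz⟩ := sq_one_of _ _ _ _ bdy bz (by norm_num) h0 (by linarith)
    obtain ⟨hsx, -⟩ := sq_one_of _ _ _ _ bx bz (by norm_num) h1 (by linarith)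
    have cx0 : cos (2*cx*t) = 0 := by
      apply pow_eq_zero_iff two_ne_zero |>.1; linarith
    have cy0 : cos (2*cy*t) = 0 := by
      apply pow_eq_zero_iff two_ne_zero |>.1; linarith
    have cz0 : cos (2*cz*t) = 0 := by
      apply pow_eq_zero_iff two_ne_zero |>.1; linarith
    have ht0 : t ≠ 0 := by rintro rfl; simp at cx0
    have hx0 : cx ≠ 0 := by rintro rfl; simp at cx0
    have hy0 : cy ≠ 0 := by rintro rfl; simp at cy0
    have hz0 : cz ≠ 0 := by rintro rfl; simp at cz0
    obtain ⟨k1, hk1⟩ := Real.cos_eq_zero_iff.1 cx0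
    obtain ⟨k2, hk2⟩ := Real.cos_eq_zero_iff.1 cy0
    obtain ⟨k3, hk3⟩ := Real.cos_eq_zero_iff.1 cz0
    have hne : π * t ≠ 0 := mul_ne_zero Real.pi_ne_zero ht0
    refine ⟨hx0, hy0, hz0, k1, k2, k3, ?_, ?_⟩
    · apply mul_right_cancel₀ hne
      linear_combination (2*k2+1) * π / 2 * hk1 - (2*k1+1) * π / 2 * hk2
    · apply mul_right_cancel₀ hne
      linear_combination (2*k3+1) * π / 2 * hk1 - (2*k1+1) * π / 2 * hk3
  · intro h s hs
    refine Set.Subset.antisymm (reach_sub cx cy cz s hs) ?_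
    intro v hv
    rw [mem_closedBall_zero_iff, norm_le_one_iff] at hv
    obtain ⟨t, ht, hx, hy, hz⟩ := time_pos cx cy cz h
    rw [mem_reach_iff]
    refine ⟨t, ht, ?_⟩
    have ex := sin_sq_add_cos_sq (2*cx*t)
    have ey := sin_sq_add_cos_sq (2*cy*t)
    have ez := sin_sq_add_cos_sq (2*cz*t)
    rw [hx] at ex
    rw [hy] at ey
    rw [hz] at ez
    rw [hx, hy, hz]
    generalize sin (2*cx*t) = a at *
    generalize sin (2*cy*t) = b at *
    generalize sin (2*cz*t) = c at *
    have ha : a^2 = 1 := by linarith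
    have hb : b^2 = 1 := by linarith
    have hc : c^2 = 1 := by linarith
    refine ⟨!₂[b*c*v 0, a*c*v 1, a*b*v 2], ?_, ?_, ?_, ?_⟩
    · rw [norm_le_one_iff]
      simp [mul_pow, ha, hb, hc]
      exact hv
    · simp
      linear_combination (-(c^2) * v 0) * hb - v 0 * hc
    · simp
      linear_combination (-(c^2) * v 1) * ha - v 1 * hc
    · simp
      linear_combination (-(b^2) * v 2) * ha - v 2 * hb
end
end

section
/- The following are equivalent: (i) for all s₀, s' ∈ ℝ³ with ‖s₀‖ = ‖s'‖ = 1 there exist t ≥ 0 and p ∈ ℝ³ with ‖p‖ ≤ 1 such that A(t,s₀)·p + a(t,s₀) = s'; (ii) the odd-ratio condition holds, i.e. c_x, c_y, c_z are all nonzero and there exist integers k₁, k₂, k₃ such that c_x·(2k₂+1) = c_y·(2k₁+1) and c_x·(2k₃+1) = c_z·(2k₁+1). -/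
open Matrix Real

noncomputable section

theorem core_aux (Sx Cx Sy Cy u v w : ℝ) (hx : Sx^2 + Cx^2 = 1) (hy : Sy^2 + Cy^2 = 1)
    (hp : u^2 + v^2 + w^2 ≤ 1) (h1 : (Sy*u)^2 + (Sx*v)^2 + (Sx*Sy*w + Cx*Cy)^2 = 1)
    (hu : Sy*u ≠ 0) (hv : Sx*v ≠ 0) (hle : Cx^2 ≤ Cy^2) : Cx = 0 ∧ Cy = 0 := by
  have hSx : Sx ≠ 0 := left_ne_zero_of_mul hv
  have hu0 : u ≠ 0 := right_ne_zero_of_mul hu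
  have key : (1 - u^2 - v^2 - w^2) * Sx^2 + (Cy^2 - Cx^2) * u^2 + (Cx*Sy - Sx*Cy*w)^2 = 0 := by
    have e1 : Sx^2 = 1 - Cx^2 := by linarith
    have e2 : Sy^2 = 1 - Cy^2 := by linarith
    have h2 : Sy^2*u^2 + Sx^2*v^2 + Sx^2*Sy^2*w^2 + 2*(Sx*Sy*w*Cx*Cy) + Cx^2*Cy^2 = 1 := by
      linarith [h1]
    have h3 : (Cx*Sy - Sx*Cy*w)^2 = Cx^2*Sy^2 + Sx^2*Cy^2*w^2 - 2*(Sx*Sy*w*Cx*Cy) := by ring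
    rw [h3]
    rw [e1, e2] at h2 ⊢
    linarith
  have a1 : 0 ≤ (1 - u^2 - v^2 - w^2) * Sx^2 := mul_nonneg (by linarith) (sq_nonneg _)
  have a2 : 0 ≤ (Cy^2 - Cx^2) * u^2 := mul_nonneg (by linarith) (sq_nonneg _)
  have a3 := sq_nonneg (Cx*Sy - Sx*Cy*w)
  have b2 : (Cy^2 - Cx^2) * u^2 = 0 := by linarith
  have b3 : (Cx*Sy - Sx*Cy*w)^2 = 0 := by linarith
  have c2 : Cy^2 = Cx^2 := by
    rcases mul_eq_zero.mp b2 with h | h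
    · linarith
    · exact absurd h (pow_ne_zero 2 hu0)
  have c3 : Cx*Sy = Sx*Cy*w := by
    have := pow_eq_zero_iff (two_ne_zero) |>.mp b3
    linarith
  have c4 : Sy^2 = Sx^2 := by linarith
  have c5 : Cx^2 * (Sx^2 * (1 - w^2)) = 0 := by
    have : (Cx*Sy)^2 = (Sx*Cy*w)^2 := by rw [c3]
    rw [mul_pow, mul_pow, mul_pow, c2, c4] at this
    linarith
  have hw : 0 < 1 - w^2 := by
    have := pow_pos (abs_pos.mpr hu0) 2
    rw [sq_abs] at this
    nlinarith [sq_nonneg v]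
  have c6 : Cx = 0 := by
    rcases mul_eq_zero.mp c5 with h | h
    · exact pow_eq_zero_iff (two_ne_zero) |>.mp h
    · rcases mul_eq_zero.mp h with h | h
      · exact absurd h (pow_ne_zero 2 hSx)
      · exact absurd h hw.ne'
  refine ⟨c6, ?_⟩
  rw [c6] at c2
  exact pow_eq_zero_iff (two_ne_zero) |>.mp (by simpa using c2)

theorem core_cos (Sx Cx Sy Cy u v w : ℝ) (hx : Sx^2 + Cx^2 = 1) (hy : Sy^2 + Cy^2 = 1)
    (hp : u^2 + v^2 + w^2 ≤ 1) (h1 : Sy*u = 2/3) (h2 : Sx*v = 2/3)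
    (h3 : Sx*Sy*w + Cx*Cy = 1/3) : Cx = 0 ∧ Cy = 0 := by
  have hu : Sy*u ≠ 0 := by rw [h1]; norm_num
  have hv : Sx*v ≠ 0 := by rw [h2]; norm_num
  rcases le_total (Cx^2) (Cy^2) with h | h
  · exact core_aux Sx Cx Sy Cy u v w hx hy hp (by rw [h1, h2, h3]; norm_num) hu hv h
  · refine (core_aux Sy Cy Sx Cx v u w hy hx (by linarith) ?_ hv hu h).symm
    rw [h1, h2, mul_comm Sy Sx, mul_comm Cy Cx, h3]; norm_num

theorem odd_cast_ne (k : ℤ) : (2 * (k : ℝ) + 1) ≠ 0 := by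
  have : (2 * k + 1 : ℤ) ≠ 0 := by omega
  exact_mod_cast this

theorem odd_of_cos (a b t : ℝ) (ha : Real.cos (2*a*t) = 0) (hb : Real.cos (2*b*t) = 0) :
    a ≠ 0 ∧ b ≠ 0 ∧ ∃ m n : ℤ, a * (2 * (m : ℝ) + 1) = b * (2 * (n : ℝ) + 1) := by
  have hane : a ≠ 0 := by rintro rfl; simp at ha
  have hbne : b ≠ 0 := by rintro rfl; simp at hb
  have ht : t ≠ 0 := by rintro rfl; simp at ha
  obtain ⟨n, hn⟩ := Real.cos_eq_zero_iff.mp ha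
  obtain ⟨m, hm⟩ := Real.cos_eq_zero_iff.mp hb
  refine ⟨hane, hbne, m, n, ?_⟩
  apply mul_right_cancel₀ ht
  linear_combination (2 * (m : ℝ) + 1) / 2 * hn - (2 * (n : ℝ) + 1) / 2 * hm

/-- Theorem 1, pure-state controllability: every pure state (unit
Bloch vector) can be steered to every other pure state iff the odd-ratio
condition holds. -/
theorem pureState_controllable_iff_oddRatio (cx cy cz : ℝ) :
    (∀ s₀ s' : EuclideanSpace ℝ (Fin 3), ‖s₀‖ = 1 → ‖s'‖ = 1 →
      ∃ t ≥ (0:ℝ), ∃ p : EuclideanSpace ℝ (Fin 3), ‖p‖ ≤ 1 ∧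
        (Amat cx cy cz t s₀).mulVec p + avec cx cy cz t s₀ = s') ↔
    OddRatio cx cy cz := by
  constructor
  · intro H
    have hz := H !₂[0, 0, 1] !₂[2/3, 2/3, 1/3]
      (by simp [EuclideanSpace.norm_eq, Fin.sum_univ_three])
      (by rw [EuclideanSpace.norm_eq, Real.sqrt_eq_one]; simp [Fin.sum_univ_three]; norm_num)
    have hx := H !₂[1, 0, 0] !₂[1/3, 2/3, 2/3]
      (by simp [EuclideanSpace.norm_eq, Fin.sum_univ_three])
      (by rw [EuclideanSpace.norm_eq, Real.sqrt_eq_one]; simp [Fin.sum_univ_three]; norm_num)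
    have hxy : ∃ t, Real.cos (2*cx*t) = 0 ∧ Real.cos (2*cy*t) = 0 := by
      obtain ⟨t, -, p, hp, h⟩ := hz
      have hp2 : p 0 ^ 2 + p 1 ^ 2 + p 2 ^ 2 ≤ 1 := by
        have := EuclideanSpace.real_norm_sq_eq p
        rw [Fin.sum_univ_three] at this
        nlinarith [norm_nonneg p]
      have e0 := congrFun h 0
      have e1 := congrFun h 1
      have e2 := congrFun h 2
      simp [Amat, avec, Matrix.mulVec, dotProduct, Fin.sum_univ_three] at e0 e1 e2
      have hs := Real.sin_sq_add_cos_sq (2*cz*t)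
      refine ⟨t, core_cos (Real.sin (2*cx*t)) _ (Real.sin (2*cy*t)) _
        (Real.sin (2*cz*t) * p 0 - Real.cos (2*cz*t) * p 1)
        (Real.cos (2*cz*t) * p 0 + Real.sin (2*cz*t) * p 1) (p 2)
        (Real.sin_sq_add_cos_sq _) (Real.sin_sq_add_cos_sq _) ?_ ?_ ?_ ?_⟩
      · linear_combination hp2 + (p 0 ^ 2 + p 1 ^ 2) * hs
      · linear_combination e0
      · linear_combination e1
      · linear_combination e2
    have hyz : ∃ t, Real.cos (2*cy*t) = 0 ∧ Real.cos (2*cz*t) = 0 := by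
      obtain ⟨t, -, p, hp, h⟩ := hx
      have hp2 : p 0 ^ 2 + p 1 ^ 2 + p 2 ^ 2 ≤ 1 := by
        have := EuclideanSpace.real_norm_sq_eq p
        rw [Fin.sum_univ_three] at this
        nlinarith [norm_nonneg p]
      have e0 := congrFun h 0
      have e1 := congrFun h 1
      have e2 := congrFun h 2
      simp [Amat, avec, Matrix.mulVec, dotProduct, Fin.sum_univ_three] at e0 e1 e2
      have hs := Real.sin_sq_add_cos_sq (2*cx*t)
      refine ⟨t, core_cos (Real.sin (2*cy*t)) _ (Real.sin (2*cz*t)) _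
        (Real.sin (2*cx*t) * p 1 - Real.cos (2*cx*t) * p 2)
        (Real.cos (2*cx*t) * p 1 + Real.sin (2*cx*t) * p 2) (p 0)
        (Real.sin_sq_add_cos_sq _) (Real.sin_sq_add_cos_sq _) ?_ ?_ ?_ ?_⟩
      · linear_combination hp2 + (p 1 ^ 2 + p 2 ^ 2) * hs
      · linear_combination e1
      · linear_combination e2
      · linear_combination e0
    obtain ⟨t, h1, h2⟩ := hxy
    obtain ⟨r, h3, h4⟩ := hyz
    obtain ⟨hcx, hcy, a, b, hab⟩ := odd_of_cos cx cy t h1 h2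
    obtain ⟨-, hcz, c, d, hcd⟩ := odd_of_cos cy cz r h3 h4
    refine ⟨hcx, hcy, hcz, 2*b*d + b + d, 2*a*d + a + d, 2*a*c + a + c, ?_, ?_⟩
    · push_cast
      linear_combination (2 * (d : ℝ) + 1) * hab
    · push_cast
      linear_combination (2 * (c : ℝ) + 1) * hab + (2 * (b : ℝ) + 1) * hcd
  · rintro ⟨hcx, hcy, hcz, k₁, k₂, k₃, h2, h3⟩ s₀ s' - hs'
    have hcos : ∀ (c : ℝ) (k : ℤ), cx * (2 * (k : ℝ) + 1) = c * (2 * (k₁ : ℝ) + 1) →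
        Real.cos (2 * c * |(2 * (k₁ : ℝ) + 1) * π / (4 * cx)|) = 0 := by
      intro c k hk
      have : Real.cos (2 * c * ((2 * (k₁ : ℝ) + 1) * π / (4 * cx))) = 0 := by
        rw [Real.cos_eq_zero_iff]
        refine ⟨k, ?_⟩
        field_simp
        linear_combination (-4) * hk
      rcases abs_choice ((2 * (k₁ : ℝ) + 1) * π / (4 * cx)) with h | h
      · rw [h, this]
      · rw [h, mul_neg, Real.cos_neg, this]
    have hX := hcos cx k₁ rfl
    have hY := hcos cy k₂ h2
    have hZ := hcos cz k₃ h3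
    set t := |(2 * (k₁ : ℝ) + 1) * π / (4 * cx)| with ht
    have sX := Real.sin_sq_add_cos_sq (2*cx*t)
    have sY := Real.sin_sq_add_cos_sq (2*cy*t)
    have sZ := Real.sin_sq_add_cos_sq (2*cz*t)
    rw [hX] at sX
    rw [hY] at sY
    rw [hZ] at sZ
    refine ⟨t, abs_nonneg _, !₂[Real.sin (2*cy*t) * Real.sin (2*cz*t) * s' 0,
      Real.sin (2*cx*t) * Real.sin (2*cz*t) * s' 1,
      Real.sin (2*cx*t) * Real.sin (2*cy*t) * s' 2], ?_, ?_⟩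
    · rw [← hs', EuclideanSpace.norm_eq, EuclideanSpace.norm_eq]
      apply le_of_eq
      have sX' : Real.sin (2*cx*t) ^ 2 = 1 := by linarith
      have sY' : Real.sin (2*cy*t) ^ 2 = 1 := by linarith
      have sZ' : Real.sin (2*cz*t) ^ 2 = 1 := by linarith
      simp [Fin.sum_univ_three, mul_pow, sX', sY', sZ']
    · have sX' : Real.sin (2*cx*t) ^ 2 = 1 := by linarith
      have sY' : Real.sin (2*cy*t) ^ 2 = 1 := by linarith
      have sZ' : Real.sin (2*cz*t) ^ 2 = 1 := by linarith
      ext i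
      fin_cases i
      · simp [Amat, avec, Matrix.mulVec, dotProduct, Fin.sum_univ_three, hX, hY, hZ]
        linear_combination s' 0 * Real.sin (2*cz*t) ^ 2 * sY' + s' 0 * sZ'
      · simp [Amat, avec, Matrix.mulVec, dotProduct, Fin.sum_univ_three, hX, hY, hZ]
        linear_combination s' 1 * Real.sin (2*cz*t) ^ 2 * sX' + s' 1 * sZ'
      · simp [Amat, avec, Matrix.mulVec, dotProduct, Fin.sum_univ_three, hX, hY, hZ]
        linear_combination s' 2 * Real.sin (2*cy*t) ^ 2 * sX' + s' 2 * sY'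
end
end

section
/- The following are equivalent: (i) for every s₀ ∈ ℝ³ with ‖s₀‖ ≤ 1 and every T > 0, the set R_T(s₀) has nonempty interior in ℝ³; (ii) c_x ≠ 0, c_y ≠ 0 and c_z ≠ 0. -/
open Matrix Real

noncomputable section

/-- The reachable set from `s₀` until time `T`:
`R_T(s₀) = {A(t,s₀)p + a(t,s₀) : 0 ≤ t ≤ T, ‖p‖ ≤ 1}`. -/
def reachUntil (cx cy cz T : ℝ) (s₀ : EuclideanSpace ℝ (Fin 3)) :
    Set (EuclideanSpace ℝ (Fin 3)) :=
  {v | ∃ t, 0 ≤ t ∧ t ≤ T ∧ ∃ p : EuclideanSpace ℝ (Fin 3), ‖p‖ ≤ 1 ∧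
    (Amat cx cy cz t s₀).mulVec p + avec cx cy cz t s₀ = v}


lemma Amat_det_pos (cx cy cz t : ℝ) (s : Fin 3 → ℝ) (hx : Real.sin (2*cx*t) ≠ 0)
    (hy : Real.sin (2*cy*t) ≠ 0) (hz : Real.sin (2*cz*t) ≠ 0) :
    0 < (Amat cx cy cz t s).det := by
  have h : (Amat cx cy cz t s).det =
      (Real.sin (2*cx*t) * Real.sin (2*cy*t) * Real.sin (2*cz*t))^2
      + (s 0 * Real.cos (2*cx*t) * Real.sin (2*cy*t) * Real.sin (2*cz*t))^2
      + (s 1 * Real.cos (2*cy*t) * Real.sin (2*cx*t) * Real.sin (2*cz*t))^2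
      + (s 2 * Real.cos (2*cz*t) * Real.sin (2*cx*t) * Real.sin (2*cy*t))^2 := by
    simp [Amat, Matrix.det_fin_three]
    ring
  rw [h]
  positivity

lemma sin_ne_of_small (c t : ℝ) (hc : c ≠ 0) (ht : 0 < t) (h : |c| * t ≤ 1) :
    Real.sin (2*c*t) ≠ 0 := by
  have hpi := Real.pi_gt_three
  have h1 : |2*c*t| = 2 * (|c| * t) := by
    rw [abs_mul, abs_mul, abs_of_pos ht]; norm_num; ring
  have h2 : |2*c*t| < π := by rw [h1]; linarith
  rw [abs_lt] at h2
  intro h0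
  rw [Real.sin_eq_zero_iff_of_lt_of_lt h2.1 h2.2] at h0
  have : 2*c*t ≠ 0 := by positivity
  exact this h0

lemma no_interior_of_coord (S : Set (EuclideanSpace ℝ (Fin 3))) (i : Fin 3)
    (h : ∀ v ∈ S, v i = 0) : ¬ (interior S).Nonempty := by
  intro hne
  have hsub : S ⊆ (LinearMap.ker (EuclideanSpace.proj i : EuclideanSpace ℝ (Fin 3) →L[ℝ] ℝ).toLinearMap :
      Set (EuclideanSpace ℝ (Fin 3))) := by
    intro v hv
    simpa using h v hv
  have htop := Submodule.eq_top_of_nonempty_interior' _ (hne.mono (interior_mono hsub))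
  have : EuclideanSpace.single i (1:ℝ) ∈
      LinearMap.ker (EuclideanSpace.proj i : EuclideanSpace ℝ (Fin 3) →L[ℝ] ℝ).toLinearMap := by
    rw [htop]; trivial
  simp at this

/-- Theorem 2, accessibility: every reachable set `R_T(s₀)` has
nonempty interior iff `cₓ ≠ 0`, `c_y ≠ 0` and `c_z ≠ 0`. -/
theorem accessible_iff_nonzero (cx cy cz : ℝ) :
    (∀ s₀ : EuclideanSpace ℝ (Fin 3), ‖s₀‖ ≤ 1 → ∀ T > (0:ℝ),
      (interior (reachUntil cx cy cz T s₀)).Nonempty) ↔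
    (cx ≠ 0 ∧ cy ≠ 0 ∧ cz ≠ 0) := by
  constructor
  · intro h
    have h0 := h 0 (by simp) 1 one_pos
    refine ⟨?_, ?_, ?_⟩
    · rintro rfl
      refine no_interior_of_coord _ 1 ?_ h0
      rintro v ⟨t, -, -, p, -, hv⟩
      rw [← congrFun hv 1]
      simp [Amat, avec, Matrix.mulVec, dotProduct, Fin.sum_univ_three]
    · rintro rfl
      refine no_interior_of_coord _ 0 ?_ h0
      rintro v ⟨t, -, -, p, -, hv⟩
      rw [← congrFun hv 0]
      simp [Amat, avec, Matrix.mulVec, dotProduct, Fin.sum_univ_three]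
    · rintro rfl
      refine no_interior_of_coord _ 0 ?_ h0
      rintro v ⟨t, -, -, p, -, hv⟩
      rw [← congrFun hv 0]
      simp [Amat, avec, Matrix.mulVec, dotProduct, Fin.sum_univ_three]
  · rintro ⟨hx, hy, hz⟩ s₀ - T hT
    obtain ⟨t, ht0, htT, h1⟩ : ∃ t : ℝ, 0 < t ∧ t ≤ T ∧ (1 + |cx| + |cy| + |cz|) * t ≤ 1 := by
      have hK : 0 < 1 + |cx| + |cy| + |cz| := by positivity
      refine ⟨min T (1 / (1 + |cx| + |cy| + |cz|)), by positivity, min_le_left _ _, ?_⟩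
      calc _ ≤ (1 + |cx| + |cy| + |cz|) * (1 / (1 + |cx| + |cy| + |cz|)) := by
            gcongr; exact min_le_right _ _
        _ = 1 := by field_simp
    have px := mul_nonneg (abs_nonneg cx) ht0.le
    have py := mul_nonneg (abs_nonneg cy) ht0.le
    have pz := mul_nonneg (abs_nonneg cz) ht0.le
    have hdet := Amat_det_pos cx cy cz t s₀ (sin_ne_of_small cx t hx ht0 (by linarith))
      (sin_ne_of_small cy t hy ht0 (by linarith)) (sin_ne_of_small cz t hz ht0 (by linarith))
    set A := Amat cx cy cz t s₀ with hA
    set a := avec cx cy cz t s₀ with ha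
    have hu : IsUnit A.det := hdet.ne'.isUnit
    let g : EuclideanSpace ℝ (Fin 3) → EuclideanSpace ℝ (Fin 3) :=
      fun v => WithLp.toLp 2 (A⁻¹ *ᵥ (WithLp.ofLp v - a))
    have hg : Continuous g := by
      refine (PiLp.continuous_toLp 2 _).comp ?_
      exact Continuous.matrix_mulVec continuous_const
        ((PiLp.continuous_ofLp 2 _).sub continuous_const)
    have hopen : IsOpen {v | ‖g v‖ < 1} := isOpen_lt hg.norm continuous_const
    refine ⟨WithLp.toLp 2 a, mem_interior.2 ⟨_, ?_, hopen, ?_⟩⟩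
    · intro v hv
      refine ⟨t, ht0.le, htT, g v, le_of_lt hv, ?_⟩
      simp only [g, ← hA, ← ha]
      rw [Matrix.mulVec_mulVec, Matrix.mul_nonsing_inv _ hu, Matrix.one_mulVec]
      simp
    · simp [g]
end
end

section
/- For all t ∈ ℝ and s₀ = (s_x,s_y,s_z) ∈ ℝ³, det A(t,s₀) = s_x²·sin²(2c_y t)·sin²(2c_z t) + s_y²·sin²(2c_x t)·sin²(2c_z t) + s_z²·sin²(2c_x t)·sin²(2c_y t) + (1 − s_x² − s_y² − s_z²)·sin²(2c_x t)·sin²(2c_y t)·sin²(2c_z t). -/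
open Matrix Real

noncomputable section

/-- explicit formula for `det A(t, s₀)`. -/
theorem det_Amat (cx cy cz t : ℝ) (s : Fin 3 → ℝ) :
    (Amat cx cy cz t s).det =
      (s 0)^2 * Real.sin (2*cy*t)^2 * Real.sin (2*cz*t)^2
      + (s 1)^2 * Real.sin (2*cx*t)^2 * Real.sin (2*cz*t)^2
      + (s 2)^2 * Real.sin (2*cx*t)^2 * Real.sin (2*cy*t)^2
      + (1 - (s 0)^2 - (s 1)^2 - (s 2)^2) *
          Real.sin (2*cx*t)^2 * Real.sin (2*cy*t)^2 * Real.sin (2*cz*t)^2 := by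
  have hx := Real.sin_sq_add_cos_sq (2*cx*t)
  have hy := Real.sin_sq_add_cos_sq (2*cy*t)
  have hz := Real.sin_sq_add_cos_sq (2*cz*t)
  rw [Matrix.det_fin_three]
  simp only [Amat, Matrix.of_apply, Matrix.cons_val]
  linear_combination
    (s 0)^2 * Real.sin (2*cy*t)^2 * Real.sin (2*cz*t)^2 * hx
    + (s 1)^2 * Real.sin (2*cx*t)^2 * Real.sin (2*cz*t)^2 * hy
    + (s 2)^2 * Real.sin (2*cx*t)^2 * Real.sin (2*cy*t)^2 * hz
end
end

section
/- If c_x ≠ 0, c_y ≠ 0, c_z ≠ 0 and s₀ ∈ ℝ³ satisfies ‖s₀‖ ≤ 1, then for every T > 0 the set {t ∈ [0,T] : det A(t,s₀) = 0} is finite; in particular, det A(t,s₀) ≠ 0 for almost every t ≥ 0. -/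
open Matrix Real

noncomputable section

open MeasureTheory

theorem det_Amat_zero_imp (cx cy cz t : ℝ) (s : Fin 3 → ℝ) (h : (Amat cx cy cz t s).det = 0) :
    Real.sin (2*cx*t) = 0 ∨ Real.sin (2*cy*t) = 0 ∨ Real.sin (2*cz*t) = 0 := by
  have key : (Amat cx cy cz t s).det =
      (Real.sin (2*cx*t) * Real.sin (2*cy*t) * Real.sin (2*cz*t))^2
      + (s 0 * Real.cos (2*cx*t) * Real.sin (2*cy*t) * Real.sin (2*cz*t))^2
      + (s 1 * Real.sin (2*cx*t) * Real.cos (2*cy*t) * Real.sin (2*cz*t))^2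
      + (s 2 * Real.sin (2*cx*t) * Real.sin (2*cy*t) * Real.cos (2*cz*t))^2 := by
    rw [Matrix.det_fin_three]
    simp [Amat]
    ring
  rw [key] at h
  have h0 : (Real.sin (2*cx*t) * Real.sin (2*cy*t) * Real.sin (2*cz*t))^2 = 0 := by
    apply le_antisymm _ (sq_nonneg _)
    have h1 := sq_nonneg (s 0 * Real.cos (2*cx*t) * Real.sin (2*cy*t) * Real.sin (2*cz*t))
    have h2 := sq_nonneg (s 1 * Real.sin (2*cx*t) * Real.cos (2*cy*t) * Real.sin (2*cz*t))
    have h3 := sq_nonneg (s 2 * Real.sin (2*cx*t) * Real.sin (2*cy*t) * Real.cos (2*cz*t))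
    linarith
  have h4 := pow_eq_zero_iff (two_ne_zero) |>.mp h0
  simpa [mul_eq_zero, or_assoc] using h4

theorem sin_zero_eq {c t : ℝ} (hc : c ≠ 0) (h : Real.sin (2*c*t) = 0) :
    ∃ n : ℤ, (n:ℝ) * Real.pi / (2*c) = t := by
  obtain ⟨n, hn⟩ := Real.sin_eq_zero_iff.mp h
  exact ⟨n, by rw [hn]; field_simp⟩

theorem sin_zero_countable {c : ℝ} (hc : c ≠ 0) : {t : ℝ | Real.sin (2*c*t) = 0}.Countable :=
  (Set.countable_range (fun n : ℤ => (n:ℝ) * Real.pi / (2*c))).mono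
    (fun _ ht => sin_zero_eq hc ht)

theorem sin_zero_finite {c : ℝ} (hc : c ≠ 0) (T : ℝ) :
    {t : ℝ | t ∈ Set.Icc 0 T ∧ Real.sin (2*c*t) = 0}.Finite := by
  obtain ⟨N, hN⟩ := exists_nat_ge (|2*c| * T / Real.pi)
  refine ((Set.finite_Icc (-(N:ℤ)) N).image
    (fun n : ℤ => (n:ℝ) * Real.pi / (2*c))).subset ?_
  rintro t ⟨⟨h0, h1⟩, h⟩
  obtain ⟨n, hn⟩ := sin_zero_eq hc h
  refine ⟨n, ?_, hn⟩
  have h2 : (n:ℝ) = 2*c*t / Real.pi := by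
    rw [← hn]; field_simp
  have h3 : |(n:ℝ)| ≤ N := by
    refine le_trans ?_ hN
    rw [h2, abs_div, abs_mul, abs_of_nonneg h0, abs_of_pos Real.pi_pos]
    have := Real.pi_pos
    gcongr
  obtain ⟨h5, h6⟩ := abs_le.mp h3
  exact ⟨by exact_mod_cast h5, by exact_mod_cast h6⟩

/-- if `cₓ, c_y, c_z` are all nonzero and `‖s₀‖ ≤ 1` then the zero set
of `t ↦ det A(t,s₀)` is finite in every compact interval `[0,T]`; in particular
`det A(t,s₀) ≠ 0` for almost every `t ≥ 0`. -/
theorem det_Amat_ne_zero_ae (cx cy cz : ℝ) (hx : cx ≠ 0) (hy : cy ≠ 0) (hz : cz ≠ 0)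
    (s₀ : EuclideanSpace ℝ (Fin 3)) (hs : ‖s₀‖ ≤ 1) :
    (∀ T > (0:ℝ), {t : ℝ | t ∈ Set.Icc 0 T ∧ (Amat cx cy cz t s₀).det = 0}.Finite) ∧
    (∀ᵐ t ∂(volume.restrict (Set.Ici (0:ℝ))), (Amat cx cy cz t s₀).det ≠ 0) := by
  constructor
  · intro T _
    refine ((sin_zero_finite hx T).union
      ((sin_zero_finite hy T).union (sin_zero_finite hz T))).subset ?_
    rintro t ⟨ht, h⟩
    rcases det_Amat_zero_imp _ _ _ _ _ h with h | h | h
    · exact Or.inl ⟨ht, h⟩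
    · exact Or.inr (Or.inl ⟨ht, h⟩)
    · exact Or.inr (Or.inr ⟨ht, h⟩)
  · apply ae_restrict_of_ae
    have hc := (sin_zero_countable hx).union
      ((sin_zero_countable hy).union (sin_zero_countable hz))
    filter_upwards [hc.ae_notMem volume] with t ht h
    exact ht (det_Amat_zero_imp _ _ _ _ _ h)
end
end

section
/- If t ∈ ℝ is such that each of c_x t, c_y t, c_z t is an odd integer multiple of π/4 (i.e. of the form (2k+1)π/4 with k ∈ ℤ), then there exist φ ∈ ℝ and signs ε₀, ε_x, ε_y, ε_z ∈ {+1, −1} such that α_j(t) = ε_j · e^{iφ}/2 for every j ∈ {0, x, y, z}. -/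
open Matrix Kronecker Real

noncomputable section


/-- α₀(t) = cos(cₓt)cos(c_yt)cos(c_zt) + i sin(cₓt)sin(c_yt)sin(c_zt). -/
def α₀ (cx cy cz t : ℝ) : ℂ :=
  (Real.cos (cx*t) * Real.cos (cy*t) * Real.cos (cz*t) : ℝ) +
    Complex.I * (Real.sin (cx*t) * Real.sin (cy*t) * Real.sin (cz*t) : ℝ)

/-- αₓ(t) = cos(cₓt)sin(c_yt)sin(c_zt) + i sin(cₓt)cos(c_yt)cos(c_zt). -/
def αx (cx cy cz t : ℝ) : ℂ :=
  (Real.cos (cx*t) * Real.sin (cy*t) * Real.sin (cz*t) : ℝ) +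
    Complex.I * (Real.sin (cx*t) * Real.cos (cy*t) * Real.cos (cz*t) : ℝ)

/-- α_y(t) = sin(cₓt)cos(c_yt)sin(c_zt) + i cos(cₓt)sin(c_yt)cos(c_zt). -/
def αy (cx cy cz t : ℝ) : ℂ :=
  (Real.sin (cx*t) * Real.cos (cy*t) * Real.sin (cz*t) : ℝ) +
    Complex.I * (Real.cos (cx*t) * Real.sin (cy*t) * Real.cos (cz*t) : ℝ)

/-- α_z(t) = sin(cₓt)sin(c_yt)cos(c_zt) + i cos(cₓt)cos(c_yt)sin(c_zt). -/
def αz (cx cy cz t : ℝ) : ℂ :=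
  (Real.sin (cx*t) * Real.sin (cy*t) * Real.cos (cz*t) : ℝ) +
    Complex.I * (Real.cos (cx*t) * Real.cos (cy*t) * Real.sin (cz*t) : ℝ)

theorem aux_sign (y : ℝ) (h : y ^ 2 = 1 / 2) :
    ∃ a : ℝ, (a = 1 ∨ a = -1) ∧ y = a * (√2 / 2) := by
  have h2 : (√2 / 2) ^ 2 = (1 / 2 : ℝ) := by
    rw [div_pow, Real.sq_sqrt (by norm_num)]; norm_num
  rcases sq_eq_sq_iff_eq_or_eq_neg.1 (h.trans h2.symm) with h | h
  · exact ⟨1, Or.inl rfl, by rw [h]; ring⟩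
  · exact ⟨-1, Or.inr rfl, by rw [h]; ring⟩

theorem aux_angle (x : ℝ) (h : ∃ k : ℤ, x = (2 * (k:ℝ) + 1) * π / 4) :
    ∃ a u : ℝ, (a = 1 ∨ a = -1) ∧ (u = 1 ∨ u = -1) ∧
      Real.cos x = a * (√2 / 2) ∧ Real.sin x = a * u * (√2 / 2) := by
  obtain ⟨k, hk⟩ := h
  have h0 : Real.cos (2 * x) = 0 := by
    rw [Real.cos_eq_zero_iff]
    exact ⟨k, by rw [hk]; ring⟩
  rw [Real.cos_two_mul] at h0
  have h1 := Real.sin_sq_add_cos_sq x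
  obtain ⟨a, ha, hc⟩ := aux_sign (Real.cos x) (by linarith)
  obtain ⟨b, hb, hs⟩ := aux_sign (Real.sin x) (by linarith)
  refine ⟨a, a * b, ha, ?_, hc, ?_⟩
  · rcases ha with rfl | rfl <;> rcases hb with rfl | rfl <;> norm_num
  · rw [hs]
    rcases ha with rfl | rfl <;> ring

theorem aux_mul {a b : ℝ} (ha : a = 1 ∨ a = -1) (hb : b = 1 ∨ b = -1) :
    a * b = 1 ∨ a * b = -1 := by
  rcases ha with rfl | rfl <;> rcases hb with rfl | rfl <;> norm_num

theorem aux_exp (e : ℝ) (he : e = 1 ∨ e = -1) :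
    Complex.exp (Complex.I * ((e * (π / 4) : ℝ) : ℂ)) =
      ((√2 / 2 : ℝ) : ℂ) * (1 + Complex.I * (e : ℂ)) := by
  rw [mul_comm Complex.I, Complex.exp_mul_I, ← Complex.ofReal_cos, ← Complex.ofReal_sin]
  rcases he with rfl | rfl
  · rw [one_mul, Real.cos_pi_div_four, Real.sin_pi_div_four]
    push_cast; ring
  · rw [neg_one_mul, Real.cos_neg, Real.sin_neg, Real.cos_pi_div_four, Real.sin_pi_div_four]
    push_cast; ring

/-- if `cₓt, c_yt, c_zt` are all odd integer multiples of `π/4`, then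
all four coefficients `α_j(t)` equal `± e^{iφ}/2` for a common phase `φ`. -/
theorem alphas_eq_sign_phase (cx cy cz t : ℝ)
    (hx : ∃ k : ℤ, cx * t = (2 * (k:ℝ) + 1) * π / 4)
    (hy : ∃ k : ℤ, cy * t = (2 * (k:ℝ) + 1) * π / 4)
    (hz : ∃ k : ℤ, cz * t = (2 * (k:ℝ) + 1) * π / 4) :
    ∃ φ : ℝ, ∃ ε₀ εx εy εz : ℝ,
      (ε₀ = 1 ∨ ε₀ = -1) ∧ (εx = 1 ∨ εx = -1) ∧ (εy = 1 ∨ εy = -1) ∧ (εz = 1 ∨ εz = -1) ∧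
      α₀ cx cy cz t = (ε₀ : ℂ) * Complex.exp (Complex.I * (φ:ℝ)) / 2 ∧
      αx cx cy cz t = (εx : ℂ) * Complex.exp (Complex.I * (φ:ℝ)) / 2 ∧
      αy cx cy cz t = (εy : ℂ) * Complex.exp (Complex.I * (φ:ℝ)) / 2 ∧
      αz cx cy cz t = (εz : ℂ) * Complex.exp (Complex.I * (φ:ℝ)) / 2 := by
  obtain ⟨a, u, ha, hu, hcx, hsx⟩ := aux_angle _ hx
  obtain ⟨b, v, hb, hv, hcy, hsy⟩ := aux_angle _ hy
  obtain ⟨c, w, hc, hw, hcz, hsz⟩ := aux_angle _ hz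
  have h0 := aux_mul (aux_mul ha hb) hc
  have hs : (((√2 / 2 : ℝ)) : ℂ) ^ 2 = 1 / 2 := by
    have h2 : (√2 / 2) ^ 2 = (1 / 2 : ℝ) := by
      rw [div_pow, Real.sq_sqrt (by norm_num)]; norm_num
    rw [← Complex.ofReal_pow, h2]; norm_num
  have hsq : ∀ r : ℝ, (r = 1 ∨ r = -1) → (r : ℂ) ^ 2 = 1 := by
    rintro r (rfl | rfl) <;> norm_num
  have hu2 := hsq u hu
  have hv2 := hsq v hv
  have hw2 := hsq w hw
  refine ⟨u * v * w * (π / 4), a * b * c, a * b * c * (v * w), a * b * c * (u * w),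
    a * b * c * (u * v), h0, aux_mul h0 (aux_mul hv hw), aux_mul h0 (aux_mul hu hw),
    aux_mul h0 (aux_mul hu hv), ?_⟩
  rw [aux_exp _ (aux_mul (aux_mul hu hv) hw)]
  unfold α₀ αx αy αz
  rw [hcx, hcy, hcz, hsx, hsy, hsz]
  generalize √2 / 2 = s at hs
  push_cast
  generalize (a : ℂ) = a, (b : ℂ) = b, (c : ℂ) = c, (u : ℂ) = u, (v : ℂ) = v, (w : ℂ) = w,
    (s : ℂ) = s at *
  refine ⟨?_, ?_, ?_, ?_⟩
  · linear_combination (a*b*c*s*(1 + Complex.I*u*v*w)) * hs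
  · linear_combination (a*b*c*s*(v*w + Complex.I*u)) * hs - a*b*c*s*Complex.I*u/2*(v^2*hw2+hv2)
  · linear_combination (a*b*c*s*(u*w + Complex.I*v)) * hs - a*b*c*s*Complex.I*v/2*(u^2*hw2+hu2)
  · linear_combination (a*b*c*s*(u*v + Complex.I*w)) * hs - a*b*c*s*Complex.I*w/2*(u^2*hv2+hu2)
end
end

section
/- Suppose each of c_x, c_y, c_z is an odd integer multiple of π/8 (i.e. of the form (2k+1)π/8 with k ∈ ℤ). Then for every s₀ ∈ ℝ³ with ‖s₀‖ = 1 there exists p ∈ ℝ³ with ‖p‖ = 1 such that A(1,s₀)·p + a(1,s₀) = 0. -/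
open Matrix Real

noncomputable section

/-- At odd multiples of `π/4` the cosine is plus or minus the sine. -/
lemma cos_eq_sign_mul_sin (c : ℝ) (h : ∃ k : ℤ, c = (2 * (k:ℝ) + 1) * π / 8) :
    ∃ e : ℝ, e ^ 2 = 1 ∧ Real.cos (2 * c * 1) = e * Real.sin (2 * c * 1) := by
  obtain ⟨k, rfl⟩ := h
  have h0 : Real.cos (2 * (2 * ((2 * (k:ℝ) + 1) * π / 8) * 1)) = 0 := by
    rw [Real.cos_eq_zero_iff]
    exact ⟨k, by ring⟩
  rw [Real.cos_two_mul] at h0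
  have h1 := Real.sin_sq_add_cos_sq (2 * ((2 * (k:ℝ) + 1) * π / 8) * 1)
  generalize Real.cos (2 * ((2 * (k:ℝ) + 1) * π / 8) * 1) = C at *
  generalize Real.sin (2 * ((2 * (k:ℝ) + 1) * π / 8) * 1) = S at *
  have hC : C ^ 2 = 1 / 2 := by linarith
  have hS : S ^ 2 = 1 / 2 := by linarith
  refine ⟨2 * S * C, ?_, ?_⟩
  · linear_combination 4 * C ^ 2 * hS + 2 * hC
  · linear_combination -2 * C * hS

/-- Lemma 3, sufficiency: if each of `cₓ, c_y, c_z` is an odd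
integer multiple of `π/8`, then at time `t = 1` every pure system state can be
maximally entangled using a suitable pure probe state. -/
theorem perfect_entangler_sufficiency (cx cy cz : ℝ)
    (hx : ∃ k : ℤ, cx = (2 * (k:ℝ) + 1) * π / 8)
    (hy : ∃ k : ℤ, cy = (2 * (k:ℝ) + 1) * π / 8)
    (hz : ∃ k : ℤ, cz = (2 * (k:ℝ) + 1) * π / 8) :
    ∀ s₀ : EuclideanSpace ℝ (Fin 3), ‖s₀‖ = 1 →
      ∃ p : EuclideanSpace ℝ (Fin 3), ‖p‖ = 1 ∧
        (Amat cx cy cz 1 s₀).mulVec p + avec cx cy cz 1 s₀ = 0 := by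
  obtain ⟨ex, hex, hcx⟩ := cos_eq_sign_mul_sin cx hx
  obtain ⟨ey, hey, hcy⟩ := cos_eq_sign_mul_sin cy hy
  obtain ⟨ez, hez, hcz⟩ := cos_eq_sign_mul_sin cz hz
  intro s hs
  have hs2 : s 0 ^ 2 + s 1 ^ 2 + s 2 ^ 2 = 1 := by
    have h := EuclideanSpace.real_norm_sq_eq s
    rw [hs, Fin.sum_univ_three] at h
    linarith
  refine ⟨!₂[-(ey * ez * s 0), -(ex * ez * s 1), -(ex * ey * s 2)], ?_, ?_⟩
  · rw [← sq_eq_sq₀ (norm_nonneg _) zero_le_one, EuclideanSpace.real_norm_sq_eq,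
      Fin.sum_univ_three]
    simp
    simp only [mul_pow, hex, hey, hez]
    linarith
  · unfold Amat avec
    rw [hcx, hcy, hcz]
    generalize Real.sin (2 * cx * 1) = X
    generalize Real.sin (2 * cy * 1) = Y
    generalize Real.sin (2 * cz * 1) = Z
    ext i
    fin_cases i
    · simp [Matrix.mulVec, dotProduct, Fin.sum_univ_three]
      linear_combination Y * Z * s 1 * s 2 * ex * (hez - hey)
    · simp [Matrix.mulVec, dotProduct, Fin.sum_univ_three]
      linear_combination X * Z * s 0 * s 2 * ey * (hex - hez)
    · simp [Matrix.mulVec, dotProduct, Fin.sum_univ_three]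
      linear_combination X * Y * s 0 * s 1 * ez * (hey - hex)
end
end

section
/- The following are equivalent: (i) the odd-ratio condition holds, i.e. c_x, c_y, c_z are all nonzero and there exist integers k₁, k₂, k₃ with c_x·(2k₂+1) = c_y·(2k₁+1) and c_x·(2k₃+1) = c_z·(2k₁+1); (ii) there exists t > 0 such that for every s₀ ∈ ℝ³ with ‖s₀‖ = 1 there exists p ∈ ℝ³ with ‖p‖ = 1 satisfying A(t,s₀)·p + a(t,s₀) = 0 (i.e. the time-t evolution is a perfect entangler for every pure initial state of the system). -/
open Matrix Real

noncomputable section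

lemma ent_key (a b Y Z cY cZ p q r : ℝ) (hab : a^2 + b^2 = 1) (hY : Y^2 + cY^2 = 1)
    (hZ : Z^2 + cZ^2 = 1) (hp : p^2 + q^2 + r^2 = 1)
    (e1 : Y * Z * p + cY * cZ = 0) (e2 : Z * (a * q - b * r) = 0)
    (e3 : Y * (b * q + a * r) = 0) : Y^2 + Z^2 = 1 := by
  by_cases hY0 : Y = 0
  · subst hY0
    have hc : cY ≠ 0 := by
      rintro rfl
      norm_num at hY
    have : cZ = 0 := by
      have h : cY * cZ = 0 := by linarith
      exact (mul_eq_zero.mp h).resolve_left hc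
    subst this
    linarith
  by_cases hZ0 : Z = 0
  · subst hZ0
    have hc : cZ ≠ 0 := by
      rintro rfl
      norm_num at hZ
    have : cY = 0 := by
      have h : cY * cZ = 0 := by linarith
      exact (mul_eq_zero.mp h).resolve_right hc
    subst this
    linarith
  have h2 := (mul_eq_zero.mp e2).resolve_left hZ0
  have h3 := (mul_eq_zero.mp e3).resolve_left hY0
  have hq : q = 0 := by linear_combination a * h2 + b * h3 - q * hab
  have hr : r = 0 := by linear_combination a * h3 - b * h2 - r * hab
  subst hq hr
  have hp1 : p^2 = 1 := by linarith
  have h : Y^2 * Z^2 = cY^2 * cZ^2 := by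
    linear_combination (Y * Z * p - cY * cZ) * e1 - Y^2 * Z^2 * hp1
  have hcY : cY^2 = 1 - Y^2 := by linarith
  have hcZ : cZ^2 = 1 - Z^2 := by linarith
  rw [hcY, hcZ] at h
  linarith

lemma ent_sq (c t : ℝ) (h : Real.cos (4 * c * t) = 0) :
    Real.sin (2*c*t)^2 = 1/2 ∧ Real.cos (2*c*t)^2 = 1/2 := by
  have h1 : Real.cos (4 * c * t) = 2 * Real.cos (2*c*t)^2 - 1 := by
    rw [← Real.cos_two_mul]; ring_nf
  have h2 := Real.sin_sq_add_cos_sq (2*c*t)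
  constructor <;> linarith

lemma ent_cos (c t : ℝ) (h : Real.sin (2*c*t)^2 = 1/2) : Real.cos (4 * c * t) = 0 := by
  have h1 : Real.cos (4 * c * t) = 2 * Real.cos (2*c*t)^2 - 1 := by
    rw [← Real.cos_two_mul]; ring_nf
  have h2 := Real.sin_sq_add_cos_sq (2*c*t)
  linarith

lemma ent_ne (c t : ℝ) (h : Real.cos (4 * c * t) = 0) : c ≠ 0 := by
  rintro rfl
  simp at h

lemma ent_eqs (cx cy cz t : ℝ) (s p : Fin 3 → ℝ) :
    (Amat cx cy cz t s).mulVec p + avec cx cy cz t s = 0 ↔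
    (Real.sin (2*cy*t) * Real.sin (2*cz*t) * p 0
      + -(s 2) * Real.sin (2*cy*t) * Real.cos (2*cz*t) * p 1
      + s 1 * Real.cos (2*cy*t) * Real.sin (2*cz*t) * p 2
      + s 0 * Real.cos (2*cy*t) * Real.cos (2*cz*t) = 0) ∧
    (s 2 * Real.sin (2*cx*t) * Real.cos (2*cz*t) * p 0
      + Real.sin (2*cx*t) * Real.sin (2*cz*t) * p 1
      + -(s 0) * Real.cos (2*cx*t) * Real.sin (2*cz*t) * p 2
      + s 1 * Real.cos (2*cx*t) * Real.cos (2*cz*t) = 0) ∧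
    (-(s 1) * Real.cos (2*cy*t) * Real.sin (2*cx*t) * p 0
      + s 0 * Real.cos (2*cx*t) * Real.sin (2*cy*t) * p 1
      + Real.sin (2*cx*t) * Real.sin (2*cy*t) * p 2
      + s 2 * Real.cos (2*cx*t) * Real.cos (2*cy*t) = 0) := by
  rw [funext_iff, Fin.forall_fin_succ, Fin.forall_fin_succ, Fin.forall_fin_succ]
  simp [Amat, avec, Matrix.mulVec, dotProduct, Fin.sum_univ_three]

lemma ent_norm (p : EuclideanSpace ℝ (Fin 3)) :
    ‖p‖ = 1 ↔ p 0 ^ 2 + p 1 ^ 2 + p 2 ^ 2 = 1 := by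
  rw [EuclideanSpace.norm_eq, Real.sqrt_eq_one, Fin.sum_univ_three]
  simp

/-- Theorem 3: the odd-ratio condition holds iff some time-`t`
evolution (`t > 0`) is a perfect entangler for every pure initial state of the
system: every unit Bloch vector `s₀` can be sent to `0` using a pure probe state. -/
theorem oddRatio_iff_perfect_entangler (cx cy cz : ℝ) :
    OddRatio cx cy cz ↔
    ∃ t > (0:ℝ), ∀ s₀ : EuclideanSpace ℝ (Fin 3), ‖s₀‖ = 1 →
      ∃ p : EuclideanSpace ℝ (Fin 3), ‖p‖ = 1 ∧
        (Amat cx cy cz t s₀).mulVec p + avec cx cy cz t s₀ = 0 := by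
  constructor
  · rintro ⟨hx, hy, hz, k₁, k₂, k₃, h2, h3⟩
    have hk : (2 * (k₁ : ℝ) + 1) ≠ 0 := by
      have : (2 * k₁ + 1 : ℤ) ≠ 0 := by omega
      exact_mod_cast this
    have hu : ∃ u : ℝ, u ≠ 0 ∧ Real.cos (4 * cx * u) = 0 ∧ Real.cos (4 * cy * u) = 0 ∧
        Real.cos (4 * cz * u) = 0 := by
      refine ⟨π * (2 * (k₁ : ℝ) + 1) / (8 * cx), ?_, ?_, ?_, ?_⟩
      · have := Real.pi_ne_zero
        positivity
      · rw [Real.cos_eq_zero_iff]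
        refine ⟨k₁, ?_⟩
        field_simp
        ring
      · rw [Real.cos_eq_zero_iff]
        refine ⟨k₂, ?_⟩
        field_simp
        linear_combination (-8) * h2
      · rw [Real.cos_eq_zero_iff]
        refine ⟨k₃, ?_⟩
        field_simp
        linear_combination (-8) * h3
    have ht : ∃ u : ℝ, u > 0 ∧ Real.cos (4 * cx * u) = 0 ∧ Real.cos (4 * cy * u) = 0 ∧
        Real.cos (4 * cz * u) = 0 := by
      obtain ⟨u, hu0, h⟩ := hu
      rcases lt_or_gt_of_ne hu0 with h' | h'
      · refine ⟨-u, by linarith, ?_⟩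
        simpa only [mul_neg, Real.cos_neg] using h
      · exact ⟨u, h', h⟩
    obtain ⟨t, ht0, hX, hY, hZ⟩ := ht
    refine ⟨t, ht0, fun s hs => ?_⟩
    obtain ⟨sx, kx⟩ := ent_sq _ _ hX
    obtain ⟨sy, ky⟩ := ent_sq _ _ hY
    obtain ⟨sz, kz⟩ := ent_sq _ _ hZ
    rw [ent_norm] at hs
    refine ⟨!₂[-4 * (Real.sin (2*cy*t) * Real.cos (2*cy*t) * Real.sin (2*cz*t)
        * Real.cos (2*cz*t)) * s 0,
      -4 * (Real.sin (2*cx*t) * Real.cos (2*cx*t) * Real.sin (2*cz*t)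
        * Real.cos (2*cz*t)) * s 1,
      -4 * (Real.sin (2*cx*t) * Real.cos (2*cx*t) * Real.sin (2*cy*t)
        * Real.cos (2*cy*t)) * s 2], ?_, ?_⟩
    · rw [ent_norm]
      simp only [PiLp.toLp_apply, Matrix.cons_val_zero, Matrix.cons_val_one, Matrix.cons_val]
      simp only [mul_pow, sx, sy, sz, kx, ky, kz]
      linarith
    · rw [ent_eqs]
      simp only [PiLp.toLp_apply, Matrix.cons_val_zero, Matrix.cons_val_one, Matrix.cons_val]
      generalize Real.sin (2*cx*t) = X at *
      generalize Real.sin (2*cy*t) = Y at *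
      generalize Real.sin (2*cz*t) = Z at *
      generalize Real.cos (2*cx*t) = A at *
      generalize Real.cos (2*cy*t) = B at *
      generalize Real.cos (2*cz*t) = C at *
      refine ⟨?_, ?_, ?_⟩ <;> grind
  · rintro ⟨t, ht, H⟩
    have sc := fun c : ℝ => Real.sin_sq_add_cos_sq (2*c*t)
    have hyz : Real.sin (2*cy*t)^2 + Real.sin (2*cz*t)^2 = 1 := by
      obtain ⟨p, hp, h⟩ := H !₂[1, 0, 0] (by rw [ent_norm]; simp)
      rw [ent_norm] at hp
      rw [ent_eqs] at h
      simp at h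
      obtain ⟨e1, e2, e3⟩ := h
      exact ent_key _ _ _ _ _ _ (p 0) (p 1) (p 2) (sc cx) (sc cy) (sc cz) hp
        (by linarith) (by linarith) (by linarith)
    have hzx : Real.sin (2*cz*t)^2 + Real.sin (2*cx*t)^2 = 1 := by
      obtain ⟨p, hp, h⟩ := H !₂[0, 1, 0] (by rw [ent_norm]; simp)
      rw [ent_norm] at hp
      rw [ent_eqs] at h
      simp at h
      obtain ⟨e1, e2, e3⟩ := h
      exact ent_key _ _ _ _ _ _ (p 1) (p 2) (p 0) (sc cy) (sc cz) (sc cx) (by linarith)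
        (by linarith) (by linarith) (by linarith)
    have hxy : Real.sin (2*cx*t)^2 + Real.sin (2*cy*t)^2 = 1 := by
      obtain ⟨p, hp, h⟩ := H !₂[0, 0, 1] (by rw [ent_norm]; simp)
      rw [ent_norm] at hp
      rw [ent_eqs] at h
      simp at h
      obtain ⟨e1, e2, e3⟩ := h
      exact ent_key _ _ _ _ _ _ (p 2) (p 0) (p 1) (sc cz) (sc cx) (sc cy) (by linarith)
        (by linarith) (by linarith) (by linarith)
    have hX := ent_cos cx t (by linarith)
    have hY := ent_cos cy t (by linarith)
    have hZ := ent_cos cz t (by linarith)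
    refine ⟨ent_ne _ _ hX, ent_ne _ _ hY, ent_ne _ _ hZ, ?_⟩
    obtain ⟨k₁, h1⟩ := Real.cos_eq_zero_iff.mp hX
    obtain ⟨k₂, h2⟩ := Real.cos_eq_zero_iff.mp hY
    obtain ⟨k₃, h3⟩ := Real.cos_eq_zero_iff.mp hZ
    have hpt : π * t ≠ 0 := mul_ne_zero Real.pi_ne_zero ht.ne'
    refine ⟨k₁, k₂, k₃, ?_, ?_⟩
    · apply mul_left_cancel₀ hpt
      linear_combination (1/2) * π * (2 * (k₂:ℝ) + 1) * h1 / 2 - (1/2) * π * (2 * (k₁:ℝ) + 1) * h2 / 2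
    · apply mul_left_cancel₀ hpt
      linear_combination (1/2) * π * (2 * (k₃:ℝ) + 1) * h1 / 2 - (1/2) * π * (2 * (k₁:ℝ) + 1) * h3 / 2
end
end

section
/- Let c_x = 1 and c_y = c_z = 0 (Ising interaction Hamiltonian H_I = σx⊗σx). Then for every s₀ = (s_x, s_y, s_z) ∈ ℝ³ with ‖s₀‖ ≤ 1, the reachable set satisfies R(s₀) = { r = (r_x, r_y, r_z) ∈ ℝ³ : r_x = s_x and r_y² + r_z² ≤ s_y² + s_z² }. -/
open Matrix Real

noncomputable section

theorem exists_time_aux (C S : ℝ) (h : C^2 + S^2 ≤ 1) :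
    ∃ t ≥ (0:ℝ), ∃ q : ℝ, q^2 ≤ 1 ∧ Real.cos (2*t) = C ∧ q * Real.sin (2*t) = S := by
  have hC : C^2 ≤ 1 := by nlinarith [sq_nonneg S]
  have hC' := abs_le.mp ((sq_le_one_iff_abs_le_one C).mp hC)
  have e : 2 * (Real.arccos C / 2) = Real.arccos C := by ring
  refine ⟨Real.arccos C / 2, by have := Real.arccos_nonneg C; positivity,
    S / √(1 - C^2), ?_, ?_, ?_⟩
  · rw [div_pow, Real.sq_sqrt (by linarith)]
    exact div_le_one_of_le₀ (by linarith) (by linarith)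
  · rw [e, Real.cos_arccos hC'.1 hC'.2]
  · rw [e, Real.sin_arccos]
    by_cases h0 : √(1 - C^2) = 0
    · have h1 := (Real.sqrt_eq_zero (by linarith)).mp h0
      have : S = 0 := by
        have : S^2 = 0 := le_antisymm (by linarith) (sq_nonneg S)
        simpa using this
      simp [this]
    · field_simp

theorem mem_reach_aux (s r : EuclideanSpace ℝ (Fin 3)) :
    r ∈ reach 1 0 0 s ↔ ∃ t ≥ (0:ℝ), ∃ p : EuclideanSpace ℝ (Fin 3), ‖p‖ ≤ 1 ∧
      r 0 = s 0 ∧ r 1 = s 2 * (p 0 * Real.sin (2*t)) + s 1 * Real.cos (2*t) ∧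
      r 2 = -(s 1) * (p 0 * Real.sin (2*t)) + s 2 * Real.cos (2*t) := by
  unfold reach
  simp only [Set.mem_setOf_eq]
  refine exists_congr fun t => and_congr_right fun _ => exists_congr fun p =>
    and_congr_right fun _ => ?_
  rw [funext_iff, Fin.forall_fin_succ, Fin.forall_fin_succ, Fin.forall_fin_succ]
  simp [Amat, avec, Matrix.mulVec, dotProduct, Fin.sum_univ_three]
  constructor
  · rintro ⟨h0, h1, h2⟩
    exact ⟨h0.symm, by rw [← h1]; ring, by rw [← h2]; ring⟩
  · rintro ⟨h0, h1, h2⟩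
    exact ⟨h0.symm, by rw [h1]; ring, by rw [h2]; ring⟩

/-- Ising Hamiltonian, `cₓ = 1`, `c_y = c_z = 0`: the reachable set
from `s₀` is the circle-slice `{r : r_x = s_x, r_y² + r_z² ≤ s_y² + s_z²}`. -/
theorem reach_ising (s₀ : EuclideanSpace ℝ (Fin 3)) (hs : ‖s₀‖ ≤ 1) :
    reach 1 0 0 s₀ =
      {r : EuclideanSpace ℝ (Fin 3) |
        r 0 = s₀ 0 ∧ (r 1)^2 + (r 2)^2 ≤ (s₀ 1)^2 + (s₀ 2)^2} := by
  ext r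
  rw [mem_reach_aux]
  simp only [Set.mem_setOf_eq]
  constructor
  · rintro ⟨t, _, p, hp, h0, h1, h2⟩
    refine ⟨h0, ?_⟩
    have hp0 : (p 0)^2 ≤ 1 := by
      rw [sq_le_one_iff_abs_le_one]
      exact (PiLp.norm_apply_le p 0).trans hp
    have hcs := Real.sin_sq_add_cos_sq (2*t)
    have hle : (p 0 * Real.sin (2*t))^2 + Real.cos (2*t)^2 ≤ 1 := by
      nlinarith [mul_nonneg (sub_nonneg.mpr hp0) (sq_nonneg (Real.sin (2*t)))]
    rw [h1, h2]
    nlinarith [mul_nonneg (add_nonneg (sq_nonneg (s₀ 1)) (sq_nonneg (s₀ 2)))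
      (sub_nonneg.mpr hle)]
  · rintro ⟨h0, h⟩
    by_cases hN : (s₀ 1)^2 + (s₀ 2)^2 = 0
    · have a1 : s₀ 1 = 0 := by nlinarith [sq_nonneg (s₀ 1), sq_nonneg (s₀ 2)]
      have a2 : s₀ 2 = 0 := by nlinarith [sq_nonneg (s₀ 1), sq_nonneg (s₀ 2)]
      have b1 : r 1 = 0 := by nlinarith [sq_nonneg (r 1), sq_nonneg (r 2)]
      have b2 : r 2 = 0 := by nlinarith [sq_nonneg (r 1), sq_nonneg (r 2)]
      exact ⟨0, le_refl _, 0, by simp, h0, by simp [a1, b1], by simp [a2, b2]⟩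
    · have hpos : 0 < (s₀ 1)^2 + (s₀ 2)^2 := lt_of_le_of_ne (by positivity) (Ne.symm hN)
      obtain ⟨t, ht, q, hq, hc, hsn⟩ := exists_time_aux
        ((r 1 * s₀ 1 + r 2 * s₀ 2) / ((s₀ 1)^2 + (s₀ 2)^2))
        ((r 1 * s₀ 2 - r 2 * s₀ 1) / ((s₀ 1)^2 + (s₀ 2)^2)) (by
          rw [div_pow, div_pow, ← add_div, div_le_one (by positivity)]
          nlinarith [mul_le_mul_of_nonneg_left h hpos.le])
      refine ⟨t, ht, EuclideanSpace.single 0 q, ?_, h0, ?_, ?_⟩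
      · rw [EuclideanSpace.norm_single]
        exact (sq_le_one_iff_abs_le_one q).mp hq
      · simp only [EuclideanSpace.single_apply, if_true]
        rw [hc, hsn]; field_simp; ring
      · simp only [EuclideanSpace.single_apply, if_true]
        rw [hc, hsn]; field_simp; ring
end
end

section
/- Suppose the odd-ratio condition holds, i.e. c_x, c_y, c_z are all nonzero and there exist integers k₁, k₂, k₃ with c_x·(2k₂+1) = c_y·(2k₁+1) and c_x·(2k₃+1) = c_z·(2k₁+1). Then the system is controllable using only pure probe states: for all s₀, s' ∈ ℝ³ with ‖s₀‖ ≤ 1 and ‖s'‖ ≤ 1, there exist t ≥ 0 and p ∈ ℝ³ with ‖p‖ = 1 such that A(t,s₀)·p + a(t,s₀) = s'. -/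
open Matrix Real

noncomputable section

/-- Moving along a nonzero direction from the ball one reaches the sphere. -/
lemma exists_norm_one {p v : EuclideanSpace ℝ (Fin 3)} (hp : ‖p‖ ≤ 1) (hv : v ≠ 0) :
    ∃ l : ℝ, ‖p + l • v‖ = 1 := by
  have hv' : 0 < ‖v‖ := norm_pos_iff.mpr hv
  have hc : ContinuousOn (fun l : ℝ => ‖p + l • v‖) (Set.Icc 0 (2 / ‖v‖)) := by fun_prop
  have h := intermediate_value_Icc (by positivity) hc
  have hm : (1:ℝ) ∈ Set.Icc ‖p + (0:ℝ) • v‖ ‖p + (2 / ‖v‖) • v‖ := by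
    refine ⟨by simpa using hp, ?_⟩
    have h1 : ‖(2 / ‖v‖) • v‖ = 2 := by
      rw [norm_smul, Real.norm_of_nonneg (by positivity)]
      field_simp
    have h2 := norm_sub_le (p + (2 / ‖v‖) • v) p
    rw [add_sub_cancel_left, h1] at h2
    linarith
  obtain ⟨l, -, hl⟩ := h hm
  exact ⟨l, hl⟩

lemma general_pure (M : ℝ → Matrix (Fin 3) (Fin 3) ℝ) (a : ℝ → Fin 3 → ℝ)
    (hM : Continuous M) (ha : Continuous a) (h0 : (M 0).det = 0)
    (s : Fin 3 → ℝ) (T : ℝ) (hT : 0 ≤ T) (q : EuclideanSpace ℝ (Fin 3)) (hq : ‖q‖ ≤ 1)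
    (hqs : (M T).mulVec q + a T = s) :
    ∃ t ≥ (0:ℝ), ∃ p : EuclideanSpace ℝ (Fin 3), ‖p‖ = 1 ∧ (M t).mulVec p + a t = s := by
  set K : Set (ℝ × EuclideanSpace ℝ (Fin 3)) :=
    (Set.Icc 0 T ×ˢ Metric.closedBall 0 1) ∩ {x | (M x.1).mulVec x.2 + a x.1 = s} with hK
  have hKc : IsCompact K := by
    refine (isCompact_Icc.prod (isCompact_closedBall _ _)).inter_right ?_
    refine isClosed_eq ?_ continuous_const
    refine Continuous.add (Continuous.matrix_mulVec (hM.comp continuous_fst) ?_)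
      (ha.comp continuous_fst)
    fun_prop
  have hne : K.Nonempty := ⟨(T, q), ⟨⟨⟨hT, le_rfl⟩, by simpa using hq⟩, hqs⟩⟩
  obtain ⟨⟨t, p⟩, ⟨⟨⟨ht0, htT⟩, hp⟩, hps⟩, hmin⟩ :=
    hKc.exists_isMinOn hne continuous_fst.continuousOn
  simp only [Metric.mem_closedBall, dist_zero_right, Set.mem_setOf_eq] at hp hps ht0 htT
  refine ⟨t, ht0, ?_⟩
  by_cases hd : (M t).det = 0
  · obtain ⟨v, hv, hv0⟩ := Matrix.exists_mulVec_eq_zero_iff.mpr hd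
    have hv' : WithLp.toLp 2 v ≠ (0 : EuclideanSpace ℝ (Fin 3)) := by
      simpa using hv
    obtain ⟨l, hl⟩ := exists_norm_one hp hv'
    refine ⟨_, hl, ?_⟩
    simp only [WithLp.ofLp_add, WithLp.ofLp_smul, Matrix.mulVec_add, Matrix.mulVec_smul, hv0]
    simpa using hps
  rcases hp.eq_or_lt with hp1 | hp1
  · exact ⟨p, hp1, hps⟩
  exfalso
  have htpos : 0 < t := by
    rcases ht0.eq_or_lt with h | h
    · subst h; exact absurd h0 hd
    · exact h
  set f : ℝ → EuclideanSpace ℝ (Fin 3) := fun u =>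
    WithLp.toLp 2 (((M u).det)⁻¹ • ((M u).adjugate.mulVec (s - a u))) with hf
  have hsolve : ∀ u, (M u).det ≠ 0 → (M u).mulVec (f u) + a u = s := by
    intro u hu
    simp only [hf, Matrix.mulVec_smul, Matrix.mulVec_mulVec, Matrix.mul_adjugate,
      Matrix.smul_mulVec, Matrix.one_mulVec, smul_smul, inv_mul_cancel₀ hu, one_smul]
    simp
  have hft : f t = p := by
    have h1 : s - a t = (M t).mulVec p := by rw [← hps]; simp
    ext i
    simp only [hf, h1, Matrix.mulVec_mulVec, Matrix.adjugate_mul,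
      Matrix.smul_mulVec, Matrix.one_mulVec, smul_smul, inv_mul_cancel₀ hd, one_smul]
  have hdc : Continuous fun u => (M u).det := hM.matrix_det
  have hfc : ContinuousAt f t := by
    refine (PiLp.continuous_toLp 2 _).continuousAt.comp ?_
    exact (hdc.continuousAt.inv₀ hd).smul
      (Continuous.matrix_mulVec hM.matrix_adjugate (continuous_const.sub ha)).continuousAt
  have e1 : ∀ᶠ u in nhds t, ‖f u‖ < 1 :=
    hfc.norm.eventually_lt continuousAt_const (by simpa [hft] using hp1)
  have e2 : ∀ᶠ u in nhds t, (M u).det ≠ 0 := hdc.continuousAt.eventually_ne hd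
  have e3 : ∀ᶠ u in nhds t, 0 < u := lt_mem_nhds htpos
  have e4 : ∃ᶠ u in nhds t, u < t := by
    have : ∃ᶠ u in nhdsWithin t (Set.Iio t), u < t :=
      Filter.Eventually.frequently self_mem_nhdsWithin
    exact this.filter_mono nhdsWithin_le_nhds
  obtain ⟨u, hu, ⟨hu1, hu2⟩, hu3⟩ := (e4.and_eventually ((e1.and e2).and e3)).exists
  have hmem : (u, f u) ∈ K :=
    ⟨⟨⟨hu3.le, hu.le.trans htT⟩, by simpa using hu1.le⟩, hsolve u hu2⟩
  have := hmin hmem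
  simp only [Set.mem_setOf_eq] at this
  linarith

lemma cos_abs_arg (c τ : ℝ) : Real.cos (2 * c * |τ|) = Real.cos (2 * c * τ) := by
  rcases abs_choice τ with h | h <;> rw [h]
  rw [mul_neg, Real.cos_neg]

/-- Remark 1: under the odd-ratio condition, the system is
controllable using only pure probe states (`‖p‖ = 1`). -/
theorem oddRatio_imp_controllable_pure_probe (cx cy cz : ℝ)
    (h : OddRatio cx cy cz) :
    ∀ s₀ s' : EuclideanSpace ℝ (Fin 3), ‖s₀‖ ≤ 1 → ‖s'‖ ≤ 1 →
      ∃ t ≥ (0:ℝ), ∃ p : EuclideanSpace ℝ (Fin 3), ‖p‖ = 1 ∧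
        (Amat cx cy cz t s₀).mulVec p + avec cx cy cz t s₀ = s' := by
  obtain ⟨hx, hy, hz, k₁, k₂, k₃, h2, h3⟩ := h
  intro s₀ s' _ hs'
  set τ : ℝ := (2 * (k₁ : ℝ) + 1) * π / 2 / (2 * cx) with hτ
  have ax : 2 * cx * τ = (2 * (k₁ : ℝ) + 1) * π / 2 := by rw [hτ]; field_simp
  have ay : 2 * cy * τ = (2 * (k₂ : ℝ) + 1) * π / 2 := by
    rw [hτ]; field_simp; linear_combination -h2
  have az : 2 * cz * τ = (2 * (k₃ : ℝ) + 1) * π / 2 := by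
    rw [hτ]; field_simp; linear_combination -h3
  have Cx : Real.cos (2 * cx * |τ|) = 0 := by
    rw [cos_abs_arg, ax]; exact Real.cos_eq_zero_iff.mpr ⟨k₁, rfl⟩
  have Cy : Real.cos (2 * cy * |τ|) = 0 := by
    rw [cos_abs_arg, ay]; exact Real.cos_eq_zero_iff.mpr ⟨k₂, rfl⟩
  have Cz : Real.cos (2 * cz * |τ|) = 0 := by
    rw [cos_abs_arg, az]; exact Real.cos_eq_zero_iff.mpr ⟨k₃, rfl⟩
  have Sx : Real.sin (2 * cx * |τ|) ^ 2 = 1 := by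
    have := Real.sin_sq_add_cos_sq (2 * cx * |τ|); rw [Cx] at this; linarith
  have Sy : Real.sin (2 * cy * |τ|) ^ 2 = 1 := by
    have := Real.sin_sq_add_cos_sq (2 * cy * |τ|); rw [Cy] at this; linarith
  have Sz : Real.sin (2 * cz * |τ|) ^ 2 = 1 := by
    have := Real.sin_sq_add_cos_sq (2 * cz * |τ|); rw [Cz] at this; linarith
  refine general_pure (fun t => Amat cx cy cz t s₀) (fun t => avec cx cy cz t s₀)
    ?_ ?_ ?_ s' |τ| (abs_nonneg _)
    (!₂[Real.sin (2 * cy * |τ|) * Real.sin (2 * cz * |τ|) * s' 0,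
      Real.sin (2 * cx * |τ|) * Real.sin (2 * cz * |τ|) * s' 1,
      Real.sin (2 * cx * |τ|) * Real.sin (2 * cy * |τ|) * s' 2]) ?_ ?_
  · refine continuous_matrix fun i j => ?_
    fin_cases i <;> fin_cases j <;> simp [Amat] <;> fun_prop
  · refine continuous_pi fun i => ?_
    fin_cases i <;> simp [avec] <;> fun_prop
  · simp [Amat, Matrix.det_fin_three]
  · refine le_trans (le_of_eq ?_) hs'
    rw [EuclideanSpace.norm_eq, EuclideanSpace.norm_eq]
    congr 1
    simp [Fin.sum_univ_three, mul_pow, Sx, Sy, Sz]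
  · ext i
    fin_cases i <;>
      simp [Amat, avec, Matrix.mulVec, dotProduct, Fin.sum_univ_three, Cx, Cy, Cz]
    · linear_combination (s' 0 * Real.sin (2 * cz * |τ|) ^ 2) * Sy + s' 0 * Sz
    · linear_combination (s' 1 * Real.sin (2 * cz * |τ|) ^ 2) * Sx + s' 1 * Sz
    · linear_combination (s' 2 * Real.sin (2 * cy * |τ|) ^ 2) * Sx + s' 2 * Sy
end
end
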